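/- arXiv:1609.05388 — 2 statements merged into one kernel-verified Lean document; each statement's English description precedes it below -/
import Mathlib

section
/- Main theorem (existential form): there exists a universal constant C > 0 such that the following holds. Let T ⊆ ℝ^d be a finite set with |T| ≥ 2, let P ∈ ℝ^{s×d} be a matrix with orthonormal rows (P·Pᵀ = I_s) that has distortion at most δ on T for some 0 ≤ δ ≤ 1, and let 0 < ε < 1. Then, with k = ⌈C · ε⁻² · log |T|⌉ and r = s + k, there exists a matrix Π ∈ ℝ^{r×d} such that for all distinct x, y ∈ T, (1 − δε)·‖x − y‖ ≤ ‖Π(x − y)‖ ≤ (1 + δε)·‖x − y‖. -/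
/-!
Write `Q = 1 - PᵀP`. Since `P` has orthonormal rows, `‖Qz‖² = ‖z‖² - ‖Pz‖²`, and low distortion of
`P` on a difference `z` bounds this by `(1 - (1 - δ)²)‖z‖² ≤ 2δ‖z‖²`. Stack `P` on top of `GQ`, where
`G` is a Johnson–Lindenstrauss matrix with `k` rows preserving the squared lengths of all residuals
`Qz` up to a factor `1 ± ε/2`. The squared length of the image of `z` then differs from `‖z‖²` by at
most `(ε/2)‖Qz‖² ≤ δε‖z‖²`, which `sqrt_distortion` turns into the claim.

The matrix `G` comes from `exists_jl`: a union bound for a random sign matrix, with expectations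
written as finite averages. The upper tail uses `signAvg_exp_sq_le`, a comparison with the Gaussian
exponential moment proved by adding one sign at a time; the lower tail uses moments two and four.
With `C = 128`, the `|T|²` differences fail with total probability at most `2|T|²·|T|⁻⁴ < 1`.
-/

open scoped BigOperators

/-- Euclidean (ℓ₂) norm of a vector in `ℝ^n` given as `Fin n → ℝ`. -/
noncomputable def euclNorm {n : ℕ} (v : Fin n → ℝ) : ℝ :=
  Real.sqrt (∑ i, v i ^ 2)

/-- A matrix `M ∈ ℝ^{r×d}` has distortion at most `δ` on a finite set `T ⊆ ℝ^d` if for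
all distinct `x, y ∈ T`, `(1 − δ)·‖x − y‖ ≤ ‖M(x − y)‖ ≤ (1 + δ)·‖x − y‖`. -/
def HasDistortionOn {r d : ℕ} (M : Matrix (Fin r) (Fin d) ℝ) (δ : ℝ)
    (T : Finset (Fin d → ℝ)) : Prop :=
  ∀ x ∈ T, ∀ y ∈ T, x ≠ y →
    (1 - δ) * euclNorm (x - y) ≤ euclNorm (M.mulVec (x - y)) ∧
      euclNorm (M.mulVec (x - y)) ≤ (1 + δ) * euclNorm (x - y)

/-! ### Averages over random signs -/

/-- The value `±1` of a sign encoded as a Boolean. -/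
def sgn (b : Bool) : ℝ := if b then 1 else -1

/-- The Rademacher sum `∑ ±wᵢ` with signs `σ`. -/
def signSum {n : ℕ} (w : Fin n → ℝ) (σ : Fin n → Bool) : ℝ := ∑ i, sgn (σ i) * w i

/-- Expectation of `f` over `n` independent uniform signs. -/
noncomputable def signAvg (n : ℕ) (f : (Fin n → Bool) → ℝ) : ℝ := (1 / 2) ^ n * ∑ σ, f σ

lemma signAvg_mono {n : ℕ} {f g : (Fin n → Bool) → ℝ} (h : ∀ σ, f σ ≤ g σ) :
    signAvg n f ≤ signAvg n g :=
  mul_le_mul_of_nonneg_left (Finset.sum_le_sum fun σ _ => h σ) (by positivity)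

lemma signAvg_succ {n : ℕ} (f : (Fin (n + 1) → Bool) → ℝ) :
    signAvg (n + 1) f = (signAvg n (fun τ => f (Fin.cons true τ)) +
      signAvg n (fun τ => f (Fin.cons false τ))) / 2 := by
  unfold signAvg
  rw [← (Fin.consEquiv (fun _ : Fin (n + 1) => Bool)).sum_comp f, Fintype.sum_prod_type]
  rw [Fintype.sum_bool]
  change (1 / 2) ^ (n + 1) * (∑ τ, f (Fin.cons true τ) + ∑ τ, f (Fin.cons false τ)) = _
  ring

lemma signSum_cons {n : ℕ} (w : Fin (n + 1) → ℝ) (b : Bool) (τ : Fin n → Bool) :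
    signSum w (Fin.cons b τ) = sgn b * w 0 + signSum (fun i => w i.succ) τ := by
  simp [signSum, Fin.sum_univ_succ]

/-- One step of the exponential moment bound: averaging `exp (s x²)` over `x = a ± w` is dominated
by the corresponding average for `x = a + w g` with `g` standard Gaussian. -/
lemma exp_sq_step (s a w : ℝ) (hs : 0 ≤ s) (h : 2 * s * w ^ 2 < 1) :
    (Real.exp (s * (a + w) ^ 2) + Real.exp (s * (a - w) ^ 2)) / 2 ≤
      Real.exp (s * a ^ 2 / (1 - 2 * s * w ^ 2)) / Real.sqrt (1 - 2 * s * w ^ 2) := by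
  have hpos : 0 < 1 - 2 * s * w ^ 2 := by linarith
  have h1 : (Real.exp (s * (a + w) ^ 2) + Real.exp (s * (a - w) ^ 2)) / 2 =
      Real.exp (s * a ^ 2 + s * w ^ 2) * Real.cosh (2 * s * a * w) := by
    rw [Real.cosh_eq, mul_div_assoc', mul_add, ← Real.exp_add, ← Real.exp_add]
    congr 3 <;> ring_nf
  have h2 := Real.cosh_le_exp_half_sq (2 * s * a * w)
  have h3 : Real.exp (s * w ^ 2) ≤ 1 / Real.sqrt (1 - 2 * s * w ^ 2) := by
    rw [le_div_iff₀ (Real.sqrt_pos.2 hpos)]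
    have : Real.sqrt (1 - 2 * s * w ^ 2) ≤ Real.exp (-(s * w ^ 2)) := by
      apply Real.sqrt_le_iff.2 ⟨(Real.exp_pos _).le, ?_⟩
      rw [← Real.exp_nat_mul]
      have := Real.add_one_le_exp (-(2 * s * w ^ 2))
      calc _ ≤ Real.exp (-(2 * s * w ^ 2)) := by linarith
        _ = _ := by congr 1; push_cast; ring
    calc _ ≤ Real.exp (s * w ^ 2) * Real.exp (-(s * w ^ 2)) := by gcongr
      _ = 1 := by rw [← Real.exp_add]; simp
  have h4 : s * a ^ 2 + (2 * s * a * w) ^ 2 / 2 ≤ s * a ^ 2 / (1 - 2 * s * w ^ 2) := by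
    rw [le_div_iff₀ hpos]
    have : 0 ≤ s * a ^ 2 * (2 * s * w ^ 2) ^ 2 := by positivity
    nlinarith
  rw [h1]
  calc _ ≤ Real.exp (s * a ^ 2 + s * w ^ 2) * Real.exp ((2 * s * a * w) ^ 2 / 2) := by gcongr
    _ = Real.exp (s * a ^ 2 + (2 * s * a * w) ^ 2 / 2) * Real.exp (s * w ^ 2) := by
      rw [← Real.exp_add, ← Real.exp_add]; congr 1; ring
    _ ≤ Real.exp (s * a ^ 2 / (1 - 2 * s * w ^ 2)) * (1 / Real.sqrt (1 - 2 * s * w ^ 2)) := by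
      gcongr
    _ = _ := by ring

/-- Squares of Rademacher sums have exponential moments at most those of the Gaussian with the same
mean and variance. The shift `a` makes the induction on the number of signs close up. -/
lemma signAvg_exp_sq_le (n : ℕ) : ∀ (w : Fin n → ℝ) (a t : ℝ), 0 ≤ t → 2 * t * ∑ i, w i ^ 2 < 1 →
    signAvg n (fun σ => Real.exp (t * (a + signSum w σ) ^ 2)) ≤
      Real.exp (t * a ^ 2 / (1 - 2 * t * ∑ i, w i ^ 2)) /
        Real.sqrt (1 - 2 * t * ∑ i, w i ^ 2) := by
  induction n with
  | zero => intro w a t _ _; simp [signAvg, signSum]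
  | succ n ih =>
    intro w a t ht h
    rw [Fin.sum_univ_succ] at h ⊢
    have hW : 0 ≤ ∑ i : Fin n, w i.succ ^ 2 := Finset.sum_nonneg fun i _ => sq_nonneg _
    have i1 := ih (fun i => w i.succ) (a + w 0) t ht
    have i2 := ih (fun i => w i.succ) (a - w 0) t ht
    set W := ∑ i : Fin n, w i.succ ^ 2
    have hw : 0 ≤ t * w 0 ^ 2 := by positivity
    have hD : 0 < 1 - 2 * t * W := by nlinarith
    have hs : 2 * (t / (1 - 2 * t * W)) * w 0 ^ 2 < 1 := by
      rw [mul_div_assoc', div_mul_eq_mul_div, div_lt_one hD]; nlinarith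
    have st := exp_sq_step (t / (1 - 2 * t * W)) a (w 0) (by positivity) hs
    have e : 1 - 2 * t * (w 0 ^ 2 + W) =
        (1 - 2 * t * W) * (1 - 2 * (t / (1 - 2 * t * W)) * w 0 ^ 2) := by
      field_simp; ring
    rw [signAvg_succ]
    simp only [signSum_cons, sgn, if_true, Bool.false_eq_true, if_false]
    simp only [one_mul, neg_mul, ← add_assoc, ← sub_eq_add_neg]
    have j1 := i1 (by linarith)
    have j2 := i2 (by linarith)
    rw [e, Real.sqrt_mul hD.le]
    calc _ ≤ (Real.exp (t / (1 - 2 * t * W) * (a + w 0) ^ 2) +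
          Real.exp (t / (1 - 2 * t * W) * (a - w 0) ^ 2)) / 2 / Real.sqrt (1 - 2 * t * W) := by
          rw [mul_div_right_comm] at j1 j2
          calc _ ≤ _ := div_le_div_of_nonneg_right (add_le_add j1 j2) (by norm_num)
            _ = _ := by ring
      _ ≤ _ := div_le_div_of_nonneg_right st (Real.sqrt_nonneg _)
      _ = _ := by
        rw [div_div, mul_comm (Real.sqrt _) (Real.sqrt _), div_mul_eq_mul_div, div_div]

lemma signAvg_sq (n : ℕ) : ∀ (w : Fin n → ℝ) (a : ℝ),
    signAvg n (fun σ => (a + signSum w σ) ^ 2) = a ^ 2 + ∑ i, w i ^ 2 := by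
  induction n with
  | zero => intro w a; simp [signAvg, signSum]
  | succ n ih =>
    intro w a
    rw [signAvg_succ, Fin.sum_univ_succ]
    simp only [signSum_cons, sgn, if_true, Bool.false_eq_true, if_false, ← add_assoc, ih]
    ring

lemma signAvg_pow_four_le (n : ℕ) : ∀ (w : Fin n → ℝ) (a : ℝ),
    signAvg n (fun σ => (a + signSum w σ) ^ 4) ≤
      a ^ 4 + 6 * a ^ 2 * ∑ i, w i ^ 2 + 3 * (∑ i, w i ^ 2) ^ 2 := by
  induction n with
  | zero => intro w a; simp [signAvg, signSum]
  | succ n ih =>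
    intro w a
    rw [signAvg_succ, Fin.sum_univ_succ]
    have i1 := ih (fun i => w i.succ) (a + 1 * w 0)
    have i2 := ih (fun i => w i.succ) (a + -1 * w 0)
    simp only [signSum_cons, sgn, if_true, Bool.false_eq_true, if_false, ← add_assoc]
    nlinarith [sq_nonneg (w 0 ^ 2)]

/-- Upper-tail exponential moment, at the near-optimal parameter `t = ε / (4‖w‖²)`. -/
lemma signAvg_upper {n : ℕ} (w : Fin n → ℝ) (ε : ℝ) (h0 : 0 < ε) (h1 : ε ≤ 1)
    (hw : 0 < ∑ i, w i ^ 2) :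
    signAvg n (fun σ => Real.exp (ε / (4 * ∑ i, w i ^ 2) * signSum w σ ^ 2)) ≤
      Real.exp (ε / 4 * (1 + ε) - ε ^ 2 / 8) := by
  have e : 2 * (ε / (4 * ∑ i, w i ^ 2)) * ∑ i, w i ^ 2 = ε / 2 := by field_simp; norm_num
  have := signAvg_exp_sq_le n w 0 (ε / (4 * ∑ i, w i ^ 2)) (by positivity) (by rw [e]; linarith)
  rw [e] at this
  simp only [zero_add] at this
  refine this.trans ?_
  have hp : 0 < 1 - ε / 2 := by linarith
  rw [div_le_iff₀ (Real.sqrt_pos.2 hp)]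
  simp only [ne_eq, OfNat.ofNat_ne_zero, not_false_eq_true, zero_pow, mul_zero, zero_div,
    Real.exp_zero]
  -- `exp (-(u + u²)) ≤ 1 - u` for `0 ≤ u ≤ 1/2`, applied with `u = ε / 2`.
  have hx : Real.exp (-(ε / 2 + ε ^ 2 / 4)) ≤ 1 - ε / 2 := by
    rw [Real.exp_neg]
    apply inv_le_of_inv_le₀ hp
    have q := Real.quadratic_le_exp_of_nonneg (x := ε / 2 + ε ^ 2 / 4) (by positivity)
    refine le_trans ?_ q
    rw [inv_le_iff_one_le_mul₀ hp]
    nlinarith [pow_pos h0 2, pow_pos h0 3, pow_pos h0 4, pow_pos h0 5,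
      mul_nonneg (pow_pos h0 2).le (sub_nonneg.2 h1), mul_nonneg (pow_pos h0 3).le (sub_nonneg.2 h1),
      mul_nonneg (pow_pos h0 4).le (sub_nonneg.2 h1)]
  have hy : Real.exp (-(ε / 4 + ε ^ 2 / 8)) ≤ Real.sqrt (1 - ε / 2) := by
    apply Real.le_sqrt_of_sq_le
    rw [← Real.exp_nat_mul]
    convert hx using 2; push_cast; ring
  calc (1 : ℝ) = Real.exp (ε / 4 * (1 + ε) - ε ^ 2 / 8) * Real.exp (-(ε / 4 + ε ^ 2 / 8)) := by
        rw [← Real.exp_add, eq_comm, Real.exp_eq_one_iff]; ring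
    _ ≤ _ := by gcongr

/-- Lower-tail exponential moment; here the second and fourth moments suffice, as
`exp (-x) ≤ 1 - x + x² / 2` for `x ≥ 0`. -/
lemma signAvg_lower {n : ℕ} (w : Fin n → ℝ) (ε : ℝ) (h0 : 0 < ε)
    (hw : 0 < ∑ i, w i ^ 2) :
    signAvg n (fun σ => Real.exp (-(ε / (4 * ∑ i, w i ^ 2)) * signSum w σ ^ 2)) ≤
      Real.exp (-(ε / 4 * (1 - ε)) - ε ^ 2 / 8) := by
  have hq : ∀ x : ℝ, 0 ≤ x → Real.exp (-x) ≤ 1 - x + x ^ 2 / 2 := by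
    intro x hx
    rw [Real.exp_neg]
    have q := Real.quadratic_le_exp_of_nonneg hx
    have p : 0 < 1 - x + x ^ 2 / 2 := by nlinarith [sq_nonneg (x - 1)]
    apply inv_le_of_inv_le₀ p
    refine le_trans ?_ q
    rw [inv_le_iff_one_le_mul₀ p]
    nlinarith [sq_nonneg (x ^ 2)]
  have m2 := signAvg_sq n w 0
  have m4 := signAvg_pow_four_le n w 0
  simp only [zero_add] at m2 m4
  set W := ∑ i, w i ^ 2
  set t := ε / (4 * W) with ht
  have htW : t * W = ε / 4 := by rw [ht]; field_simp
  have ht0 : 0 ≤ t := by positivity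
  have lin : signAvg n (fun σ => 1 - t * signSum w σ ^ 2 + t ^ 2 / 2 * signSum w σ ^ 4) =
      1 - t * signAvg n (fun σ => signSum w σ ^ 2) +
        t ^ 2 / 2 * signAvg n (fun σ => signSum w σ ^ 4) := by
    simp only [signAvg, Finset.sum_add_distrib, Finset.sum_sub_distrib, ← Finset.mul_sum]
    simp only [Finset.sum_const, Finset.card_univ, Fintype.card_fun, Fintype.card_bool,
      Fintype.card_fin, nsmul_eq_mul, mul_one]
    have : ((1 : ℝ) / 2) ^ n * (2 ^ n : ℕ) = 1 := by
      push_cast; rw [← mul_pow]; norm_num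
    linear_combination this
  calc _ ≤ signAvg n (fun σ => 1 - t * signSum w σ ^ 2 + t ^ 2 / 2 * signSum w σ ^ 4) := by
        apply signAvg_mono
        intro σ
        have := hq (t * signSum w σ ^ 2) (by positivity)
        rw [neg_mul]
        calc _ ≤ _ := this
          _ = _ := by ring
    _ ≤ 1 - ε / 4 + 3 / 2 * (ε / 4) ^ 2 := by
        rw [lin, m2]
        have := mul_le_mul_of_nonneg_left m4 (show 0 ≤ t ^ 2 / 2 by positivity)
        calc _ ≤ 1 - t * (0 ^ 2 + W) + t ^ 2 / 2 * (0 ^ 4 + 6 * 0 ^ 2 * W + 3 * W ^ 2) := by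
              linarith
          _ = 1 - t * W + 3 / 2 * (t * W) ^ 2 := by ring
          _ = _ := by rw [htW]
    _ ≤ (-(ε / 4 * (1 - ε)) - ε ^ 2 / 8) + 1 := by nlinarith [sq_nonneg ε]
    _ ≤ _ := Real.add_one_le_exp _

/-! ### The Johnson–Lindenstrauss lemma -/

lemma avg_prod_rows {d k : ℕ} (f : (Fin d → Bool) → ℝ) :
    ((1 / 2 : ℝ) ^ d) ^ k * ∑ S : Fin k → Fin d → Bool, ∏ i, f (S i) = signAvg d f ^ k := by
  have := Fintype.prod_sum (κ := fun _ : Fin k => Fin d → Bool) (fun _ σ => f σ)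
  rw [← this]
  simp [signAvg, mul_pow]

/-- Johnson–Lindenstrauss for squared lengths, by a union bound over the exponential moments of the
two tails for a random sign matrix scaled by `1 / √k`. -/
lemma exists_jl {d k : ℕ} (Z : Finset (Fin d → ℝ)) (ε : ℝ) (h0 : 0 < ε) (h1 : ε ≤ 1)
    (hk : 2 * (Z.card : ℝ) * Real.exp (-(k * (ε ^ 2 / 8))) < 1) :
    ∃ G : Matrix (Fin k) (Fin d) ℝ, ∀ z ∈ Z,
      |∑ i, (G.mulVec z) i ^ 2 - ∑ i, z i ^ 2| ≤ ε * ∑ i, z i ^ 2 := by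
  classical
  rcases Nat.eq_zero_or_pos k with rfl | hk0
  · -- The hypothesis forces `Z = ∅`.
    simp only [Nat.cast_zero, zero_mul, neg_zero, Real.exp_zero, mul_one] at hk
    have : Z.card = 0 := by
      have : (2 * Z.card : ℕ) < 1 := by exact_mod_cast hk
      omega
    rw [Finset.card_eq_zero] at this
    subst this
    exact ⟨0, by simp⟩
  have hkR : (0 : ℝ) < k := by exact_mod_cast hk0
  by_contra! hcon
  set c : ℝ := ((1 / 2 : ℝ) ^ d) ^ k
  have hc : 0 < c := by positivity
  -- `U z S` and `L z S` bound the indicators of the upper and lower failure for `z`.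
  let U : (Fin d → ℝ) → (Fin k → Fin d → Bool) → ℝ := fun z S =>
    Real.exp (-(k * (ε / 4 * (1 + ε)))) *
      ∏ i, Real.exp (ε / (4 * ∑ i, z i ^ 2) * signSum z (S i) ^ 2)
  let L : (Fin d → ℝ) → (Fin k → Fin d → Bool) → ℝ := fun z S =>
    Real.exp (k * (ε / 4 * (1 - ε))) *
      ∏ i, Real.exp (-(ε / (4 * ∑ i, z i ^ 2)) * signSum z (S i) ^ 2)
  let Z' := Z.filter fun z => 0 < ∑ i, z i ^ 2
  have hU : ∀ z ∈ Z', c * ∑ S, U z S ≤ Real.exp (-(k * (ε ^ 2 / 8))) := by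
    intro z hz
    have hz := (Finset.mem_filter.1 hz).2
    have b := signAvg_upper z ε h0 h1 hz
    have nn : 0 ≤ signAvg d (fun σ => Real.exp (ε / (4 * ∑ i, z i ^ 2) * signSum z σ ^ 2)) := by
      unfold signAvg; positivity
    have b' := pow_le_pow_left₀ nn b k
    rw [← avg_prod_rows, ← Real.exp_nat_mul] at b'
    calc _ = Real.exp (-(k * (ε / 4 * (1 + ε)))) * (c * ∑ S : Fin k → Fin d → Bool,
          ∏ i, Real.exp (ε / (4 * ∑ i, z i ^ 2) * signSum z (S i) ^ 2)) := by
          simp only [U, ← Finset.mul_sum]; ring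
      _ ≤ Real.exp (-(k * (ε / 4 * (1 + ε)))) * _ := mul_le_mul_of_nonneg_left b' (Real.exp_pos _).le
      _ = _ := by rw [← Real.exp_add]; congr 1; ring
  have hL : ∀ z ∈ Z', c * ∑ S, L z S ≤ Real.exp (-(k * (ε ^ 2 / 8))) := by
    intro z hz
    have hz := (Finset.mem_filter.1 hz).2
    have b := signAvg_lower z ε h0 hz
    have nn : 0 ≤ signAvg d (fun σ => Real.exp (-(ε / (4 * ∑ i, z i ^ 2)) * signSum z σ ^ 2)) := by
      unfold signAvg; positivity
    have b' := pow_le_pow_left₀ nn b k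
    rw [← avg_prod_rows, ← Real.exp_nat_mul] at b'
    calc _ = Real.exp (k * (ε / 4 * (1 - ε))) * (c * ∑ S : Fin k → Fin d → Bool,
          ∏ i, Real.exp (-(ε / (4 * ∑ i, z i ^ 2)) * signSum z (S i) ^ 2)) := by
          simp only [L, ← Finset.mul_sum]; ring
      _ ≤ Real.exp (k * (ε / 4 * (1 - ε))) * _ := mul_le_mul_of_nonneg_left b' (Real.exp_pos _).le
      _ = _ := by rw [← Real.exp_add]; congr 1; ring
  have hfail : ∀ S, 1 ≤ ∑ z ∈ Z', (U z S + L z S) := by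
    intro S
    obtain ⟨z, hz, hbad⟩ := hcon (fun i j => sgn (S i j) / Real.sqrt k)
    have hrow : ∀ i, (Matrix.mulVec (fun i j => sgn (S i j) / Real.sqrt k) z) i ^ 2 =
        signSum z (S i) ^ 2 / k := by
      intro i
      have : (Matrix.mulVec (fun i j => sgn (S i j) / Real.sqrt k) z) i =
          signSum z (S i) / Real.sqrt k := by
        simp only [Matrix.mulVec, dotProduct, signSum, Finset.sum_div]
        exact Finset.sum_congr rfl fun j _ => by ring
      rw [this, div_pow, Real.sq_sqrt hkR.le]
    simp only [hrow, ← Finset.sum_div] at hbad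
    have hWnn : 0 ≤ ∑ i, z i ^ 2 := Finset.sum_nonneg fun i _ => sq_nonneg _
    have hW : 0 < ∑ i, z i ^ 2 := by
      refine lt_of_le_of_ne hWnn fun h => ?_
      have hz0 : ∀ i, z i = 0 := by
        intro i
        have := (Finset.sum_eq_zero_iff_of_nonneg (fun i _ => sq_nonneg (z i))).1 h.symm i
          (Finset.mem_univ i)
        simpa using this
      simp [signSum, hz0] at hbad
    have hz' : z ∈ Z' := Finset.mem_filter.2 ⟨hz, hW⟩
    have Upos : ∀ z, 0 ≤ U z S := fun z => by simp only [U]; positivity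
    have Lpos : ∀ z, 0 ≤ L z S := fun z => by simp only [L]; positivity
    refine le_trans ?_ (Finset.single_le_sum (f := fun z => U z S + L z S)
      (fun z _ => add_nonneg (Upos z) (Lpos z)) hz')
    set Y := ∑ i, signSum z (S i) ^ 2 with hY
    set W := ∑ i, z i ^ 2 with hWdef
    have eU : U z S = Real.exp (ε / (4 * W) * (Y - (1 + ε) * k * W)) := by
      simp only [U]
      rw [← Real.exp_sum, ← Real.exp_add, ← Finset.mul_sum, ← hWdef, ← hY]
      congr 1; field_simp; ring
    have eL : L z S = Real.exp (ε / (4 * W) * ((1 - ε) * k * W - Y)) := by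
      simp only [L]
      rw [← Real.exp_sum, ← Real.exp_add, ← Finset.mul_sum, ← hWdef, ← hY]
      congr 1; field_simp; ring
    have ht : 0 ≤ ε / (4 * W) := by positivity
    rcases lt_abs.1 hbad with hb | hb
    · have : (1 + ε) * W < Y / k := by linarith
      rw [lt_div_iff₀ hkR] at this
      have : 1 ≤ U z S := by
        rw [eU]; exact Real.one_le_exp (mul_nonneg ht (by linarith))
      linarith [Lpos z]
    · have : Y / k < (1 - ε) * W := by linarith
      rw [div_lt_iff₀ hkR] at this
      have : 1 ≤ L z S := by
        rw [eL]; exact Real.one_le_exp (mul_nonneg ht (by linarith))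
      linarith [Upos z]
  have hone : c * ∑ _S : Fin k → Fin d → Bool, (1 : ℝ) = 1 := by
    have := avg_prod_rows (d := d) (k := k) (fun _ => 1)
    simp only [Finset.prod_const_one] at this
    rw [show c = ((1 / 2 : ℝ) ^ d) ^ k from rfl, this]
    simp [signAvg]
  have : (1 : ℝ) ≤ 2 * Z.card * Real.exp (-(k * (ε ^ 2 / 8))) := by
    calc (1 : ℝ) = c * ∑ _S : Fin k → Fin d → Bool, (1 : ℝ) := hone.symm
      _ ≤ c * ∑ S, ∑ z ∈ Z', (U z S + L z S) :=
        mul_le_mul_of_nonneg_left (Finset.sum_le_sum fun S _ => hfail S) hc.le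
      _ = ∑ z ∈ Z', (c * ∑ S, U z S + c * ∑ S, L z S) := by
        rw [Finset.sum_comm, Finset.mul_sum]
        exact Finset.sum_congr rfl fun z _ => by rw [Finset.sum_add_distrib, mul_add]
      _ ≤ ∑ z ∈ Z', (2 * Real.exp (-(k * (ε ^ 2 / 8)))) :=
        Finset.sum_le_sum fun z hz => by linarith [hU z hz, hL z hz]
      _ = Z'.card * (2 * Real.exp (-(k * (ε ^ 2 / 8)))) := by simp
      _ ≤ Z.card * (2 * Real.exp (-(k * (ε ^ 2 / 8)))) := by
        gcongr; exact Finset.filter_subset _ _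
      _ = _ := by ring
  linarith

/-! ### Combining the projection with the sketch of its residual -/

/-- Pythagoras for `z = PᵀP z + (1 - PᵀP) z`. -/
lemma residual_sq {s d : ℕ} (P : Matrix (Fin s) (Fin d) ℝ) (hP : P * P.transpose = 1)
    (z : Fin d → ℝ) :
    ∑ i, ((1 - P.transpose * P).mulVec z) i ^ 2 = ∑ i, z i ^ 2 - ∑ i, (P.mulVec z) i ^ 2 := by
  have e : ∀ {n : ℕ} (v : Fin n → ℝ), ∑ i, v i ^ 2 = v ⬝ᵥ v := fun v => by
    simp [dotProduct, sq]
  rw [e, e, e, Matrix.sub_mulVec, Matrix.one_mulVec, ← Matrix.mulVec_mulVec]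
  have h1 : z ⬝ᵥ P.transpose.mulVec (P.mulVec z) = P.mulVec z ⬝ᵥ P.mulVec z := by
    rw [Matrix.dotProduct_mulVec, Matrix.vecMul_transpose]
  have h2 : P.transpose.mulVec (P.mulVec z) ⬝ᵥ P.transpose.mulVec (P.mulVec z) =
      P.mulVec z ⬝ᵥ P.mulVec z := by
    rw [Matrix.dotProduct_mulVec, Matrix.vecMul_transpose, Matrix.mulVec_mulVec, hP,
      Matrix.one_mulVec]
  rw [sub_dotProduct, dotProduct_sub, dotProduct_sub, h1, h2,
    dotProduct_comm (P.transpose.mulVec _) z, h1]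
  ring

/-- Relative error at most `a` for the squared length gives relative error at most `a` for the
length. -/
lemma sqrt_distortion {A B a : ℝ} (hB : 0 ≤ B) (ha : 0 ≤ a) (ha1 : a ≤ 1)
    (h : |A - B| ≤ a * B) :
    (1 - a) * Real.sqrt B ≤ Real.sqrt A ∧ Real.sqrt A ≤ (1 + a) * Real.sqrt B := by
  obtain ⟨h1, h2⟩ := abs_le.1 h
  constructor
  · apply Real.le_sqrt_of_sq_le
    rw [mul_pow, Real.sq_sqrt hB]
    nlinarith [mul_nonneg (mul_nonneg ha (sub_nonneg.2 ha1)) hB]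
  · rw [Real.sqrt_le_iff]
    refine ⟨by positivity, ?_⟩
    rw [mul_pow, Real.sq_sqrt hB]
    nlinarith [mul_nonneg ha hB, mul_nonneg (mul_nonneg ha ha) hB]

/-- **Main theorem (existential form).**
There is a universal constant `C > 0` such that: for every finite `T ⊆ ℝ^d` with
`|T| ≥ 2`, every `P ∈ ℝ^{s×d}` with orthonormal rows (`P·Pᵀ = I_s`) and distortion at
most `δ` on `T` (for some `0 ≤ δ ≤ 1`), and every `0 < ε < 1`, with
`k = ⌈C · ε⁻² · log |T|⌉` and `r = s + k`, there exists `Π ∈ ℝ^{r×d}` with distortion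
at most `δ·ε` on `T`. -/
theorem stmt_2 :
    ∃ C : ℝ, 0 < C ∧
      ∀ (d s : ℕ) (T : Finset (Fin d → ℝ)) (P : Matrix (Fin s) (Fin d) ℝ) (δ ε : ℝ),
        2 ≤ T.card → P * P.transpose = 1 → 0 ≤ δ → δ ≤ 1 →
        HasDistortionOn P δ T → 0 < ε → ε < 1 →
        ∃ M : Matrix (Fin (s + ⌈C * ε⁻¹ ^ 2 * Real.log (T.card : ℝ)⌉₊)) (Fin d) ℝ,
          HasDistortionOn M (δ * ε) T := by
  classical
  refine ⟨128, by norm_num, ?_⟩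
  intro d s T P δ ε hT hP hδ0 hδ1 hdist hε0 hε1
  set k := ⌈128 * ε⁻¹ ^ 2 * Real.log (T.card : ℝ)⌉₊ with hk
  set Q : Matrix (Fin d) (Fin d) ℝ := 1 - P.transpose * P with hQ
  let Z : Finset (Fin d → ℝ) := (T ×ˢ T).image fun p => Q.mulVec (p.1 - p.2)
  have hn : (2 : ℝ) ≤ T.card := by exact_mod_cast hT
  have hn0 : (0 : ℝ) < T.card := by linarith
  have hZ : (Z.card : ℝ) ≤ (T.card : ℝ) ^ 2 := by
    have : Z.card ≤ (T ×ˢ T).card := Finset.card_image_le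
    rw [Finset.card_product, ← sq] at this
    exact_mod_cast this
  have hexp : Real.exp (-(k * ((ε / 2) ^ 2 / 8))) ≤ ((T.card : ℝ) ^ 4)⁻¹ := by
    have h1 : 128 * ε⁻¹ ^ 2 * Real.log (T.card : ℝ) ≤ k := Nat.le_ceil _
    have h2 : 4 * Real.log (T.card : ℝ) ≤ k * ((ε / 2) ^ 2 / 8) := by
      calc _ = 128 * ε⁻¹ ^ 2 * Real.log (T.card : ℝ) * ((ε / 2) ^ 2 / 8) := by
            field_simp; ring
        _ ≤ _ := by gcongr
    calc _ ≤ Real.exp (-(4 * Real.log (T.card : ℝ))) := by gcongr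
      _ = _ := by
        rw [Real.exp_neg, show (4 : ℝ) = ((4 : ℕ) : ℝ) by norm_num, Real.exp_nat_mul,
          Real.exp_log hn0]
  have hcard : 2 * (Z.card : ℝ) * Real.exp (-(k * ((ε / 2) ^ 2 / 8))) < 1 := by
    calc _ ≤ 2 * (T.card : ℝ) ^ 2 * ((T.card : ℝ) ^ 4)⁻¹ := by gcongr
      _ = 2 / (T.card : ℝ) ^ 2 := by field_simp
      _ < 1 := by rw [div_lt_one (by positivity)]; nlinarith
  obtain ⟨G, hG⟩ := exists_jl Z (ε / 2) (by positivity) (by linarith) hcard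
  refine ⟨fun i => Fin.addCases (fun a => P a) (fun b => (G * Q) b) i, ?_⟩
  intro x hx y hy hxy
  have hz := hG (Q.mulVec (x - y)) (Finset.mem_image.2 ⟨(x, y), by simp [hx, hy], rfl⟩)
  have hPz := (hdist x hx y hy hxy).1
  set z := x - y
  have hres := residual_sq P hP z
  rw [← hQ] at hres
  have hsum : ∑ i, (Matrix.mulVec (fun i => Fin.addCases (fun a => P a) (fun b => (G * Q) b) i :
        Matrix (Fin (s + k)) (Fin d) ℝ) z) i ^ 2 =
      ∑ i, (P.mulVec z) i ^ 2 + ∑ i, (G.mulVec (Q.mulVec z)) i ^ 2 := by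
    rw [Fin.sum_univ_add, Matrix.mulVec_mulVec]
    simp [Matrix.mulVec]
  have hz0 : 0 ≤ ∑ i, z i ^ 2 := Finset.sum_nonneg fun i _ => sq_nonneg _
  have hP0 : 0 ≤ ∑ i, (P.mulVec z) i ^ 2 := Finset.sum_nonneg fun i _ => sq_nonneg _
  have hPsq : (1 - δ) ^ 2 * ∑ i, z i ^ 2 ≤ ∑ i, (P.mulVec z) i ^ 2 := by
    have := pow_le_pow_left₀ (mul_nonneg (by linarith) (Real.sqrt_nonneg _)) hPz 2
    unfold euclNorm at this
    rwa [mul_pow, Real.sq_sqrt hz0, Real.sq_sqrt hP0] at this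
  have hQsq : ∑ i, (Q.mulVec z) i ^ 2 ≤ 2 * δ * ∑ i, z i ^ 2 := by
    rw [hres]; nlinarith [mul_nonneg (sq_nonneg δ) hz0]
  unfold euclNorm
  apply sqrt_distortion hz0 (by positivity) (by nlinarith)
  rw [hsum]
  calc _ = |∑ i, (G.mulVec (Q.mulVec z)) i ^ 2 - ∑ i, (Q.mulVec z) i ^ 2| := by
        rw [hres]; congr 1; ring
    _ ≤ ε / 2 * ∑ i, (Q.mulVec z) i ^ 2 := hz
    _ ≤ ε / 2 * (2 * δ * ∑ i, z i ^ 2) := by gcongr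
    _ = _ := by ring
end

section
/- Deterministic core of the main theorem: let T ⊆ ℝ^d be a finite set, let P ∈ ℝ^{s×d} have orthonormal rows (P·Pᵀ = I_s) and distortion at most δ on T for some 0 ≤ δ ≤ 1, let Q = I_d − Pᵀ P, and let 0 < ε ≤ 1. Suppose S ∈ ℝ^{k×d} is a matrix such that for every distinct pair x, y ∈ T, with v = (x − y)/‖x − y‖, one has (1 − ε/8)·‖Q v‖ ≤ ‖S Q v‖ ≤ (1 + ε/8)·‖Q v‖. Then the linear map Π : ℝ^d → ℝ^{s+k} defined by Π(w) = (P w, S Q w) satisfies, for all distinct x, y ∈ T, (1 − δε)·‖x − y‖ ≤ ‖Π(x − y)‖ ≤ (1 + δε)·‖x − y‖. -/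
/-!
Write `u = x − y`, `n = ‖u‖`, `p = ‖P u‖`, `q = ‖Q u‖` and `r = ‖S Q u‖`. Since `P Pᵀ = 1`, the matrix
`Q = 1 − Pᵀ P` is an orthogonal projection and `p² + q² = n²` (`euclNorm_sq_add_compl`), whereas
`‖Π u‖² = p² + r²` (`euclNorm_coreMap_sq`). The lower distortion bound of `P` makes the residual
small: `q² ≤ (1 − (1 − δ)²) n² ≤ 2 δ n²`. As `S` changes `q²` by a relative amount of at most
`ε/4 + ε²/64 ≤ 17 ε/64`, the squared norm `p² + r²` differs from `n²` by at most `(17/32) δ ε n²`,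
which lies within `(1 ± δ ε)² n²` because `δ ε ≤ 1` (`core_bounds`).
-/

open scoped BigOperators

/-- The linear map `Π : ℝ^d → ℝ^{s+k}`, `Π(w) = (P w, S Q w)` where `Q = I − Pᵀ P`,
with the Euclidean norm on `ℝ^{s+k}` realised by concatenating the coordinates. -/
noncomputable def coreMap {s d k : ℕ} (P : Matrix (Fin s) (Fin d) ℝ)
    (S : Matrix (Fin k) (Fin d) ℝ) (w : Fin d → ℝ) : Fin (s + k) → ℝ :=
  Fin.append (P.mulVec w) (S.mulVec ((1 - P.transpose * P).mulVec w))

lemma euclNorm_nonneg {n : ℕ} (v : Fin n → ℝ) : 0 ≤ euclNorm v := Real.sqrt_nonneg _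

lemma euclNorm_sq {n : ℕ} (v : Fin n → ℝ) : euclNorm v ^ 2 = v ⬝ᵥ v := by
  unfold euclNorm
  rw [Real.sq_sqrt (Finset.sum_nonneg fun i _ => sq_nonneg _)]
  simp [dotProduct, sq]

lemma euclNorm_pos {n : ℕ} {v : Fin n → ℝ} (hv : v ≠ 0) : 0 < euclNorm v := by
  refine lt_of_le_of_ne (euclNorm_nonneg v) fun h => hv ?_
  have h2 := euclNorm_sq v
  rw [← h] at h2
  exact dotProduct_self_eq_zero.mp (by linarith)

lemma euclNorm_smul {n : ℕ} {a : ℝ} (ha : 0 ≤ a) (v : Fin n → ℝ) :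
    euclNorm (a • v) = a * euclNorm v := by
  rw [← sq_eq_sq₀ (euclNorm_nonneg _) (mul_nonneg ha (euclNorm_nonneg _)), mul_pow, euclNorm_sq,
    euclNorm_sq, smul_dotProduct, dotProduct_smul, smul_eq_mul, smul_eq_mul]
  ring

/-- Pythagoras: when `P` has orthonormal rows, `1 − Pᵀ P` projects orthogonally onto `ker P`. -/
lemma euclNorm_sq_add_compl {s d : ℕ} {P : Matrix (Fin s) (Fin d) ℝ}
    (hP : P * P.transpose = 1) (u : Fin d → ℝ) :
    euclNorm (P.mulVec u) ^ 2 + euclNorm ((1 - P.transpose * P).mulVec u) ^ 2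
      = euclNorm u ^ 2 := by
  have hsymm : (1 - P.transpose * P).transpose = 1 - P.transpose * P := by
    simp [Matrix.transpose_sub, Matrix.transpose_mul]
  have hidem : (1 - P.transpose * P) * (1 - P.transpose * P) = 1 - P.transpose * P := by
    have h : P.transpose * P * (P.transpose * P) = P.transpose * P := by
      rw [Matrix.mul_assoc, ← Matrix.mul_assoc P, hP, Matrix.one_mul]
    rw [Matrix.mul_sub, Matrix.mul_one, Matrix.sub_mul, Matrix.one_mul, h, sub_self, sub_zero]
  have hself : ∀ {m : ℕ} (A : Matrix (Fin m) (Fin d) ℝ),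
      A.mulVec u ⬝ᵥ A.mulVec u = u ⬝ᵥ (A.transpose * A).mulVec u := by
    intro m A
    rw [← Matrix.mulVec_mulVec, Matrix.dotProduct_mulVec u, Matrix.vecMul_transpose]
  rw [euclNorm_sq, euclNorm_sq, euclNorm_sq, hself, hself, hsymm, hidem, Matrix.sub_mulVec,
    dotProduct_sub, Matrix.one_mulVec]
  ring

lemma coreMap_sub {s d k : ℕ} (P : Matrix (Fin s) (Fin d) ℝ) (S : Matrix (Fin k) (Fin d) ℝ)
    (x y : Fin d → ℝ) : coreMap P S x - coreMap P S y = coreMap P S (x - y) := by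
  funext i
  refine Fin.addCases (fun i => ?_) (fun i => ?_) i <;> simp [coreMap, Matrix.mulVec_sub]

lemma euclNorm_coreMap_sq {s d k : ℕ} (P : Matrix (Fin s) (Fin d) ℝ)
    (S : Matrix (Fin k) (Fin d) ℝ) (u : Fin d → ℝ) :
    euclNorm (coreMap P S u) ^ 2 = euclNorm (P.mulVec u) ^ 2 +
      euclNorm (S.mulVec ((1 - P.transpose * P).mulVec u)) ^ 2 := by
  rw [euclNorm_sq, euclNorm_sq, euclNorm_sq]
  simp only [coreMap, dotProduct, Fin.sum_univ_add, Fin.append_left, Fin.append_right]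

/-- The scalar estimate, with `m` standing for `‖Π u‖`. -/
lemma core_bounds {n p q r m δ ε : ℝ} (hn : 0 ≤ n) (hq : 0 ≤ q) (hr : 0 ≤ r)
    (hm : 0 ≤ m) (hδ0 : 0 ≤ δ) (hδ1 : δ ≤ 1) (hε0 : 0 < ε) (hε1 : ε ≤ 1)
    (hpq : p ^ 2 + q ^ 2 = n ^ 2) (hmpr : m ^ 2 = p ^ 2 + r ^ 2) (hnp : (1 - δ) * n ≤ p)
    (hlo : (1 - ε / 8) * q ≤ r) (hhi : r ≤ (1 + ε / 8) * q) :
    (1 - δ * ε) * n ≤ m ∧ m ≤ (1 + δ * ε) * n := by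
  have hp2 : ((1 - δ) * n) ^ 2 ≤ p ^ 2 :=
    pow_le_pow_left₀ (mul_nonneg (by linarith) hn) hnp 2
  have hq2 : q ^ 2 ≤ 2 * δ * n ^ 2 := by nlinarith [mul_nonneg (sq_nonneg δ) (sq_nonneg n)]
  have hlo2 : ((1 - ε / 8) * q) ^ 2 ≤ r ^ 2 :=
    pow_le_pow_left₀ (mul_nonneg (by linarith) hq) hlo 2
  have hhi2 : r ^ 2 ≤ ((1 + ε / 8) * q) ^ 2 := pow_le_pow_left₀ hr hhi 2
  have hεq : ε * q ^ 2 ≤ 2 * (δ * ε * n ^ 2) := by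
    have := mul_le_mul_of_nonneg_left hq2 hε0.le
    linarith
  have hε2q : ε ^ 2 * q ^ 2 ≤ ε * q ^ 2 :=
    mul_le_mul_of_nonneg_right (by nlinarith) (sq_nonneg q)
  have hε2q0 : 0 ≤ ε ^ 2 * q ^ 2 := by positivity
  have ht0 : 0 ≤ δ * ε := mul_nonneg hδ0 hε0.le
  have ht1 : δ * ε ≤ 1 := mul_le_one₀ hδ1 hε0.le hε1
  have htn0 : 0 ≤ δ * ε * n ^ 2 := mul_nonneg ht0 (sq_nonneg n)
  have htn : (δ * ε) ^ 2 * n ^ 2 ≤ δ * ε * n ^ 2 :=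
    mul_le_mul_of_nonneg_right (by nlinarith) (sq_nonneg n)
  have htn2 : 0 ≤ (δ * ε) ^ 2 * n ^ 2 := by positivity
  constructor
  · refine (sq_le_sq₀ (mul_nonneg (by linarith) hn) hm).mp ?_
    linarith
  · refine (sq_le_sq₀ hm (mul_nonneg (by linarith) hn)).mp ?_
    linarith

/-- **Deterministic core of the main theorem.**
If `P ∈ ℝ^{s×d}` has orthonormal rows and distortion at most `δ` on `T` (`0 ≤ δ ≤ 1`),
`Q = I_d − Pᵀ P`, `0 < ε ≤ 1`, and `S ∈ ℝ^{k×d}` satisfies, for every distinct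
`x, y ∈ T` with `v = (x − y)/‖x − y‖`,
`(1 − ε/8)·‖Q v‖ ≤ ‖S Q v‖ ≤ (1 + ε/8)·‖Q v‖`, then `Π(w) = (P w, S Q w)` satisfies,
for all distinct `x, y ∈ T`,
`(1 − δε)·‖x − y‖ ≤ ‖Π x − Π y‖ ≤ (1 + δε)·‖x − y‖`. -/
theorem stmt_4 {d s k : ℕ} (T : Finset (Fin d → ℝ))
    (P : Matrix (Fin s) (Fin d) ℝ) (S : Matrix (Fin k) (Fin d) ℝ) (δ ε : ℝ)
    (hP : P * P.transpose = 1) (hδ0 : 0 ≤ δ) (hδ1 : δ ≤ 1)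
    (hdist : ∀ x ∈ T, ∀ y ∈ T, x ≠ y →
      (1 - δ) * euclNorm (x - y) ≤ euclNorm (P.mulVec (x - y)) ∧
        euclNorm (P.mulVec (x - y)) ≤ (1 + δ) * euclNorm (x - y))
    (hε0 : 0 < ε) (hε1 : ε ≤ 1)
    (hS : ∀ x ∈ T, ∀ y ∈ T, x ≠ y →
      (1 - ε / 8) *
          euclNorm ((1 - P.transpose * P).mulVec ((euclNorm (x - y))⁻¹ • (x - y))) ≤
        euclNorm (S.mulVec ((1 - P.transpose * P).mulVec
          ((euclNorm (x - y))⁻¹ • (x - y)))) ∧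
      euclNorm (S.mulVec ((1 - P.transpose * P).mulVec
          ((euclNorm (x - y))⁻¹ • (x - y)))) ≤
        (1 + ε / 8) *
          euclNorm ((1 - P.transpose * P).mulVec ((euclNorm (x - y))⁻¹ • (x - y)))) :
    ∀ x ∈ T, ∀ y ∈ T, x ≠ y →
      (1 - δ * ε) * euclNorm (x - y) ≤ euclNorm (coreMap P S x - coreMap P S y) ∧
        euclNorm (coreMap P S x - coreMap P S y) ≤ (1 + δ * ε) * euclNorm (x - y) := by
  intro x hx y hy hxy
  have hn := euclNorm_pos (sub_ne_zero.mpr hxy)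
  obtain ⟨hlo, hhi⟩ := hS x hx y hy hxy
  have ha := inv_pos.mpr hn
  -- The hypothesis on `S` is homogeneous, so the normalising factor `‖x − y‖⁻¹` cancels.
  simp only [Matrix.mulVec_smul, euclNorm_smul ha.le] at hlo hhi
  rw [mul_left_comm] at hlo hhi
  rw [coreMap_sub]
  exact core_bounds hn.le (euclNorm_nonneg _) (euclNorm_nonneg _) (euclNorm_nonneg _)
    hδ0 hδ1 hε0 hε1 (euclNorm_sq_add_compl hP _) (euclNorm_coreMap_sq P S _)
    (hdist x hx y hy hxy).1 (le_of_mul_le_mul_left hlo ha) (le_of_mul_le_mul_left hhi ha)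
end
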